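/- arXiv:2102.10224 — 9 statements merged into one kernel-verified Lean document; each statement's English description precedes it below -/
import Mathlib

section
/- Central-charge component of the fourth triality (Main Theorem, family (1O,1B,2D)): for all integers m ≥ n ≥ 0 with m + n ≥ 1 and every real psi with psi ≠ 0 and psi ≠ 1, one has c1O(n,m,psi) = c1B(n, m-n, 1/psi) and c1O(n,m,psi) = c2D(m+1, n, psi/(2*(psi-1))); here psi'' = psi/(2*(psi-1)) is the unique solution of 1/psi + 1/(2*psi'') = 1. -/
/-!
Write `c1O (n, m, psi) = -A * B * C / ((psi - 1) * psi)` with `A`, `B`, `C` its three numerator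
factors in order. Under `psi ↦ 1 / psi`, `m ↦ m - n` the factors of `c1B` become
`-A / psi`, `-C / psi`, `-B / psi` and its denominator becomes `(1 - psi) / psi ^ 2`.
Under `psi ↦ psi / (2 * (psi - 1))`, `(n, m) ↦ (m + 1, n)` the factors of `c2D` become
`A / (psi - 1)`, `C / (2 * (psi - 1))`, `B / (psi - 1)` and its denominator becomes
`psi / (2 * (psi - 1) ^ 2)`. Both quotients are therefore the original one; no denominator
vanishes when `psi` is neither `0` nor `1`.
-/

noncomputable def c1O (n m psi : ℝ) : ℝ :=
  -((-1 - m + n + psi + m * psi) * (-1 - 2 * m + 2 * n + 2 * m * psi) * (-2 * m + 2 * n + psi + 2 * m * psi)) / ((psi - 1) * psi)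

noncomputable def c1B (n m psi : ℝ) : ℝ :=
  -((psi + m * psi - m - n - 1) * (2 * m * psi - 2 * m - 2 * n - 1) * (psi + 2 * m * psi - 2 * m - 2 * n)) / ((psi - 1) * psi)

noncomputable def c2D (n m psi : ℝ) : ℝ :=
  -((-m + n + 2 * m * psi) * (-1 - m + n + psi + 2 * m * psi) * (-1 - 2 * m + 2 * n - 2 * psi + 4 * m * psi)) / (psi * (2 * psi - 1))

theorem stmt3 (n m : ℤ) (hn : 0 ≤ n) (hnm : n ≤ m) (hmn : 1 ≤ m + n)
    (psi : ℝ) (hpsi0 : psi ≠ 0) (hpsi1 : psi ≠ 1) :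
    c1O (n : ℝ) (m : ℝ) psi = c1B (n : ℝ) ((m : ℝ) - (n : ℝ)) (1 / psi) ∧
    c1O (n : ℝ) (m : ℝ) psi = c2D ((m : ℝ) + 1) (n : ℝ) (psi / (2 * (psi - 1))) := by
  have hd : psi - 1 ≠ 0 := sub_ne_zero.mpr hpsi1
  have hd' : 1 - psi ≠ 0 := sub_ne_zero.mpr hpsi1.symm
  -- Each denominator of the dual side is rewritten so that its nonvanishing is visible.
  have hB : (1 / psi - 1) * (1 / psi) = (1 - psi) / psi ^ 2 := by
    field_simp
  have hD : psi / (2 * (psi - 1)) * (2 * (psi / (2 * (psi - 1))) - 1)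
      = psi / (2 * (psi - 1) ^ 2) := by
    field_simp
    ring
  constructor
  · unfold c1O c1B
    rw [hB, div_eq_div_iff (mul_ne_zero hd hpsi0) (div_ne_zero hd' (pow_ne_zero 2 hpsi0))]
    field_simp
    ring
  · unfold c1O c2D
    rw [hD, div_eq_div_iff (mul_ne_zero hd hpsi0)
      (div_ne_zero hpsi0 (mul_ne_zero two_ne_zero (pow_ne_zero 2 hd)))]
    field_simp
    ring
end

section
/- Central-charge part of the coincidences C_{psi,1D}(n,m) ≅ W_s(sp_{2r}) (Appendix B, type 1D): for all integers m, n ≥ 0 and r ≥ 1, the identity c1D(n,m,psi) = csp(r,t) holds in each of the following six cases, whenever psi is not 0 or 1, t ≠ 0, and all displayed denominators are nonzero: (1) psi = (m+n+r)/m with m ≥ 1, t = (n+r)/(2*(m+n+r)); (2) psi = (2*m+2*n-1)/(2*m+2*r+1), t = (1-n+r)/(1+2*m+2*r); (3) psi = (1+2*m+2*n+2*r)/(2*(1+m)), t = (1+2*m+2*n+2*r)/(2*(2*r+2*n-1)); (4) psi = (1+2*m+2*n)/(2*(1+m+r)), t = (1+m+r)/(1-2*n+2*r); (5) psi = (2*m+2*n-2*r-1)/(2*m-2*r+1),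 t = (1-2*m-2*n+2*r)/(2*(2*r-2*m-1)); (6) psi = (m+n-r)/(m-r), t = (r-m)/(2*(r-m-n)) with r ≠ m and r ≠ m+n. -/
/-!
Each case writes `psi = a / b` and `t = p / q` with `a, b, p, q` affine-linear in `n, m, r`.
Multiplying through by the nonvanishing denominators `(a - b) * a * b` and `p * q` turns
`c1D = csp` into a polynomial identity (`c1D_eq_csp_of_cross_mul`), which in all six cases
holds identically in `n, m, r`.
-/

noncomputable def c1D (n m psi : ℝ) : ℝ :=
  -((-m - n + m * psi) * (1 - 2 * m - 2 * n + psi + 2 * m * psi) * (-1 - 2 * m - 2 * n + 2 * psi + 2 * m * psi)) / ((psi - 1) * psi)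

noncomputable def csp (r t : ℝ) : ℝ :=
  -(r * ((2 * r + 1) * t - r - 1) * ((4 * r - 2) * t - 2 * r - 1)) / t

/-- With `psi = a / b` and `t = p / q`, clearing denominators reduces the equality of the two
central charges to a polynomial identity in the numerators and denominators. The hypotheses on
`psi` and `t` enter as `a ≠ 0`, `a ≠ b` and `p ≠ 0`. -/
theorem c1D_eq_csp_of_cross_mul {n m r psi t a b p q : ℝ} (hpsi : psi = a / b) (ht : t = p / q)
    (hb : b ≠ 0) (hq : q ≠ 0) (h0 : psi ≠ 0) (h1 : psi ≠ 1) (ht0 : t ≠ 0)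
    (h : (-(m + n) * b + m * a) * ((1 - 2 * m - 2 * n) * b + (1 + 2 * m) * a) *
        ((-1 - 2 * m - 2 * n) * b + (2 + 2 * m) * a) * (p * q) =
      r * ((2 * r + 1) * p - (r + 1) * q) * ((4 * r - 2) * p - (2 * r + 1) * q) *
        ((a - b) * a * b)) :
    c1D n m psi = csp r t := by
  subst hpsi ht
  have ha : a ≠ 0 := fun e => h0 (by simp [e])
  have hp : p ≠ 0 := fun e => ht0 (by simp [e])
  have hab : a - b ≠ 0 := fun e => h1 (by rw [sub_eq_zero.mp e, div_self hb])
  have hc : c1D n m (a / b) = -((-(m + n) * b + m * a) *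
      ((1 - 2 * m - 2 * n) * b + (1 + 2 * m) * a) *
      ((-1 - 2 * m - 2 * n) * b + (2 + 2 * m) * a)) / ((a - b) * a * b) := by
    have e : a / b - 1 = (a - b) / b := by field_simp
    unfold c1D
    rw [e]
    field_simp
    ring
  have hs : csp r (p / q) = -(r * ((2 * r + 1) * p - (r + 1) * q) *
      ((4 * r - 2) * p - (2 * r + 1) * q)) / (p * q) := by
    unfold csp
    field_simp
    ring
  rw [hc, hs, div_eq_div_iff (mul_ne_zero (mul_ne_zero hab ha) hb) (mul_ne_zero hp hq)]
  linear_combination -h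

theorem stmt9 (n m r : ℤ) (hn : 0 ≤ n) (hm : 0 ≤ m) (hr : 1 ≤ r) :
    (∀ psi t : ℝ,
      psi = ((m : ℝ) + (n : ℝ) + (r : ℝ)) / (m : ℝ) →
      t = ((n : ℝ) + (r : ℝ)) / (2 * ((m : ℝ) + (n : ℝ) + (r : ℝ))) →
      (m : ℝ) ≠ 0 →
      (2 * ((m : ℝ) + (n : ℝ) + (r : ℝ))) ≠ 0 →
      1 ≤ m →
      psi ≠ 0 →
      psi ≠ 1 →
      t ≠ 0 →
      c1D (n : ℝ) (m : ℝ) psi = csp (r : ℝ) t) ∧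
    (∀ psi t : ℝ,
      psi = (2 * (m : ℝ) + 2 * (n : ℝ) - 1) / (2 * (m : ℝ) + 2 * (r : ℝ) + 1) →
      t = (1 - (n : ℝ) + (r : ℝ)) / (1 + 2 * (m : ℝ) + 2 * (r : ℝ)) →
      (2 * (m : ℝ) + 2 * (r : ℝ) + 1) ≠ 0 →
      (1 + 2 * (m : ℝ) + 2 * (r : ℝ)) ≠ 0 →
      psi ≠ 0 →
      psi ≠ 1 →
      t ≠ 0 →
      c1D (n : ℝ) (m : ℝ) psi = csp (r : ℝ) t) ∧
    (∀ psi t : ℝ,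
      psi = (1 + 2 * (m : ℝ) + 2 * (n : ℝ) + 2 * (r : ℝ)) / (2 * (1 + (m : ℝ))) →
      t = (1 + 2 * (m : ℝ) + 2 * (n : ℝ) + 2 * (r : ℝ)) / (2 * (2 * (r : ℝ) + 2 * (n : ℝ) - 1)) →
      (2 * (1 + (m : ℝ))) ≠ 0 →
      (2 * (2 * (r : ℝ) + 2 * (n : ℝ) - 1)) ≠ 0 →
      psi ≠ 0 →
      psi ≠ 1 →
      t ≠ 0 →
      c1D (n : ℝ) (m : ℝ) psi = csp (r : ℝ) t) ∧
    (∀ psi t : ℝ,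
      psi = (1 + 2 * (m : ℝ) + 2 * (n : ℝ)) / (2 * (1 + (m : ℝ) + (r : ℝ))) →
      t = (1 + (m : ℝ) + (r : ℝ)) / (1 - 2 * (n : ℝ) + 2 * (r : ℝ)) →
      (2 * (1 + (m : ℝ) + (r : ℝ))) ≠ 0 →
      (1 - 2 * (n : ℝ) + 2 * (r : ℝ)) ≠ 0 →
      psi ≠ 0 →
      psi ≠ 1 →
      t ≠ 0 →
      c1D (n : ℝ) (m : ℝ) psi = csp (r : ℝ) t) ∧
    (∀ psi t : ℝ,
      psi = (2 * (m : ℝ) + 2 * (n : ℝ) - 2 * (r : ℝ) - 1) / (2 * (m : ℝ) - 2 * (r : ℝ) + 1) →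
      t = (1 - 2 * (m : ℝ) - 2 * (n : ℝ) + 2 * (r : ℝ)) / (2 * (2 * (r : ℝ) - 2 * (m : ℝ) - 1)) →
      (2 * (m : ℝ) - 2 * (r : ℝ) + 1) ≠ 0 →
      (2 * (2 * (r : ℝ) - 2 * (m : ℝ) - 1)) ≠ 0 →
      psi ≠ 0 →
      psi ≠ 1 →
      t ≠ 0 →
      c1D (n : ℝ) (m : ℝ) psi = csp (r : ℝ) t) ∧
    (∀ psi t : ℝ,
      psi = ((m : ℝ) + (n : ℝ) - (r : ℝ)) / ((m : ℝ) - (r : ℝ)) →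
      t = ((r : ℝ) - (m : ℝ)) / (2 * ((r : ℝ) - (m : ℝ) - (n : ℝ))) →
      ((m : ℝ) - (r : ℝ)) ≠ 0 →
      (2 * ((r : ℝ) - (m : ℝ) - (n : ℝ))) ≠ 0 →
      r ≠ m →
      r ≠ m + n →
      psi ≠ 0 →
      psi ≠ 1 →
      t ≠ 0 →
      c1D (n : ℝ) (m : ℝ) psi = csp (r : ℝ) t) := by
  refine ⟨?_, ?_, ?_, ?_, ?_, ?_⟩
  · intro psi t hpsi ht hb hq _ h0 h1 ht0
    exact c1D_eq_csp_of_cross_mul hpsi ht hb hq h0 h1 ht0 (by ring)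
  · intro psi t hpsi ht hb hq h0 h1 ht0
    exact c1D_eq_csp_of_cross_mul hpsi ht hb hq h0 h1 ht0 (by ring)
  · intro psi t hpsi ht hb hq h0 h1 ht0
    exact c1D_eq_csp_of_cross_mul hpsi ht hb hq h0 h1 ht0 (by ring)
  · intro psi t hpsi ht hb hq h0 h1 ht0
    exact c1D_eq_csp_of_cross_mul hpsi ht hb hq h0 h1 ht0 (by ring)
  · intro psi t hpsi ht hb hq h0 h1 ht0
    exact c1D_eq_csp_of_cross_mul hpsi ht hb hq h0 h1 ht0 (by ring)
  · intro psi t hpsi ht hb hq _ _ h0 h1 ht0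
    exact c1D_eq_csp_of_cross_mul hpsi ht hb hq h0 h1 ht0 (by ring)
end

section
/- Central-charge part of the coincidences C_{psi,2B}(n,m) ≅ W_s(sp_{2r}) (Appendix B, type 2B): for all integers m, n ≥ 0 and r ≥ 1, the identity c2B(n,m,psi) = csp(r,t) holds in each of the following six cases, whenever psi is not 0 or 1/2, t ≠ 0, and all displayed denominators are nonzero: (1) psi = (1+2*m-2*n+2*r)/(2*(1+2*m)), t = (1+2*m-2*n+2*r)/(4*(r-n)) with r ≠ n; (2) psi = (1+2*m-2*n)/(2*(1+2*m+2*r)), t = (1+2*m+2*r)/(4*(n+r)); (3) psi = (m-n+r)/(2*m-1), t = (1-2*n+2*r)/(4*(m-n+r)) with r ≠ n-m; (4) psi = (m-n-r)/(2*m-2*r-1), t = (1-2*m+2*r)/(4*(n-m+r)) with r ≠ m-n; (5) psi = (2*m-2*n-2*r-1)/(4*(m-r)), t = (1-2*m+2*n+2*r)/(4*(r-m)) with r ≠ m; (6) psi = (2*m-2*n-1)/(4*(m+r)), t = (1+2*n+2*r)/(4*(m+r)). -/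
/-!
Writing `psi = a / b` and `t = c / d`, the equality of the two central charges becomes, after
clearing denominators, a homogeneous identity in `(a, b)` and `(c, d)`
(`c2B_eq_csp_of_cross_mul`). At each of the six parameter pairs `a, b, c, d` are affine-linear in
`n, m, r`, and the cleared identity is a polynomial identity in `n, m, r`.
-/

noncomputable def c2B (n m psi : ℝ) : ℝ :=
  -((-m + n - psi + 2 * m * psi) * (1 - 2 * m + 2 * n + 4 * m * psi) * (-1 - 2 * m + 2 * n + 2 * psi + 4 * m * psi)) / (2 * psi * (2 * psi - 1))

/-- Equality of central charges at `psi = a / b`, `t = c / d`, reduced to its denominator-free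
form. -/
theorem c2B_eq_csp_of_cross_mul {n m r a b c d psi t : ℝ} (hpsi : psi = a / b) (ht : t = c / d)
    (hb : b ≠ 0) (hd : d ≠ 0) (hpsi0 : psi ≠ 0) (hpsi1 : psi ≠ 1 / 2) (ht0 : t ≠ 0)
    (h : ((n - m) * b + (2 * m - 1) * a) * ((1 - 2 * m + 2 * n) * b + 4 * m * a) *
          ((2 * n - 2 * m - 1) * b + (2 + 4 * m) * a) * (c * d) =
        r * ((2 * r + 1) * c - (r + 1) * d) * ((4 * r - 2) * c - (2 * r + 1) * d) *
          (2 * a * (2 * a - b) * b)) :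
    c2B n m psi = csp r t := by
  have hpsi2 : 2 * psi - 1 ≠ 0 := fun h0 => hpsi1 (by linarith)
  have ha : a = psi * b := by rw [hpsi, div_mul_cancel₀ _ hb]
  have hc : c = t * d := by rw [ht, div_mul_cancel₀ _ hd]
  subst ha hc
  unfold c2B csp
  rw [div_eq_div_iff (mul_ne_zero (mul_ne_zero two_ne_zero hpsi0) hpsi2) ht0]
  -- The cleared identity is the cross-multiplied one scaled by `b ^ 3 * d ^ 2`.
  apply mul_left_cancel₀ (mul_ne_zero (pow_ne_zero 3 hb) (pow_ne_zero 2 hd))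
  linear_combination -h

theorem stmt10 (n m r : ℤ) (hn : 0 ≤ n) (hm : 0 ≤ m) (hr : 1 ≤ r) :
    (∀ psi t : ℝ,
      psi = (1 + 2 * (m : ℝ) - 2 * (n : ℝ) + 2 * (r : ℝ)) / (2 * (1 + 2 * (m : ℝ))) →
      t = (1 + 2 * (m : ℝ) - 2 * (n : ℝ) + 2 * (r : ℝ)) / (4 * ((r : ℝ) - (n : ℝ))) →
      (2 * (1 + 2 * (m : ℝ))) ≠ 0 →
      (4 * ((r : ℝ) - (n : ℝ))) ≠ 0 →
      r ≠ n →
      psi ≠ 0 →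
      psi ≠ 1 / 2 →
      t ≠ 0 →
      c2B (n : ℝ) (m : ℝ) psi = csp (r : ℝ) t) ∧
    (∀ psi t : ℝ,
      psi = (1 + 2 * (m : ℝ) - 2 * (n : ℝ)) / (2 * (1 + 2 * (m : ℝ) + 2 * (r : ℝ))) →
      t = (1 + 2 * (m : ℝ) + 2 * (r : ℝ)) / (4 * ((n : ℝ) + (r : ℝ))) →
      (2 * (1 + 2 * (m : ℝ) + 2 * (r : ℝ))) ≠ 0 →
      (4 * ((n : ℝ) + (r : ℝ))) ≠ 0 →
      psi ≠ 0 →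
      psi ≠ 1 / 2 →
      t ≠ 0 →
      c2B (n : ℝ) (m : ℝ) psi = csp (r : ℝ) t) ∧
    (∀ psi t : ℝ,
      psi = ((m : ℝ) - (n : ℝ) + (r : ℝ)) / (2 * (m : ℝ) - 1) →
      t = (1 - 2 * (n : ℝ) + 2 * (r : ℝ)) / (4 * ((m : ℝ) - (n : ℝ) + (r : ℝ))) →
      (2 * (m : ℝ) - 1) ≠ 0 →
      (4 * ((m : ℝ) - (n : ℝ) + (r : ℝ))) ≠ 0 →
      r ≠ n - m →
      psi ≠ 0 →
      psi ≠ 1 / 2 →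
      t ≠ 0 →
      c2B (n : ℝ) (m : ℝ) psi = csp (r : ℝ) t) ∧
    (∀ psi t : ℝ,
      psi = ((m : ℝ) - (n : ℝ) - (r : ℝ)) / (2 * (m : ℝ) - 2 * (r : ℝ) - 1) →
      t = (1 - 2 * (m : ℝ) + 2 * (r : ℝ)) / (4 * ((n : ℝ) - (m : ℝ) + (r : ℝ))) →
      (2 * (m : ℝ) - 2 * (r : ℝ) - 1) ≠ 0 →
      (4 * ((n : ℝ) - (m : ℝ) + (r : ℝ))) ≠ 0 →
      r ≠ m - n →
      psi ≠ 0 →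
      psi ≠ 1 / 2 →
      t ≠ 0 →
      c2B (n : ℝ) (m : ℝ) psi = csp (r : ℝ) t) ∧
    (∀ psi t : ℝ,
      psi = (2 * (m : ℝ) - 2 * (n : ℝ) - 2 * (r : ℝ) - 1) / (4 * ((m : ℝ) - (r : ℝ))) →
      t = (1 - 2 * (m : ℝ) + 2 * (n : ℝ) + 2 * (r : ℝ)) / (4 * ((r : ℝ) - (m : ℝ))) →
      (4 * ((m : ℝ) - (r : ℝ))) ≠ 0 →
      (4 * ((r : ℝ) - (m : ℝ))) ≠ 0 →
      r ≠ m →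
      psi ≠ 0 →
      psi ≠ 1 / 2 →
      t ≠ 0 →
      c2B (n : ℝ) (m : ℝ) psi = csp (r : ℝ) t) ∧
    (∀ psi t : ℝ,
      psi = (2 * (m : ℝ) - 2 * (n : ℝ) - 1) / (4 * ((m : ℝ) + (r : ℝ))) →
      t = (1 + 2 * (n : ℝ) + 2 * (r : ℝ)) / (4 * ((m : ℝ) + (r : ℝ))) →
      (4 * ((m : ℝ) + (r : ℝ))) ≠ 0 →
      psi ≠ 0 →
      psi ≠ 1 / 2 →
      t ≠ 0 →
      c2B (n : ℝ) (m : ℝ) psi = csp (r : ℝ) t) := by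
  refine ⟨?_, ?_, ?_, ?_, ?_, ?_⟩
  · intro psi t hpsi ht hb hd _ h0 h1 ht0
    exact c2B_eq_csp_of_cross_mul hpsi ht hb hd h0 h1 ht0 (by ring)
  · intro psi t hpsi ht hb hd h0 h1 ht0
    exact c2B_eq_csp_of_cross_mul hpsi ht hb hd h0 h1 ht0 (by ring)
  · intro psi t hpsi ht hb hd _ h0 h1 ht0
    exact c2B_eq_csp_of_cross_mul hpsi ht hb hd h0 h1 ht0 (by ring)
  · intro psi t hpsi ht hb hd _ h0 h1 ht0
    exact c2B_eq_csp_of_cross_mul hpsi ht hb hd h0 h1 ht0 (by ring)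
  · intro psi t hpsi ht hb hd _ h0 h1 ht0
    exact c2B_eq_csp_of_cross_mul hpsi ht hb hd h0 h1 ht0 (by ring)
  · intro psi t hpsi ht hb h0 h1 ht0
    exact c2B_eq_csp_of_cross_mul hpsi ht hb hb h0 h1 ht0 (by ring)
end

section
/- Central-charge part of the coincidences C_{psi,2C}(n,m) ≅ W_s(sp_{2r}) (Appendix B, type 2C): for all integers m, n ≥ 0 and r ≥ 1, the identity c2C(n,m,psi) = csp(r,t) holds in each of the following six cases, whenever psi is not 0 or 1/2, t ≠ 0, and all displayed denominators are nonzero: (1) psi = (1+m+n+r)/(1+2*m), t = (1+m+n+r)/(1+2*n+2*r); (2) psi = (1+m+n)/(1+2*m+2*r), t = (1+2*m+2*r)/(2*(2*r-2*n-1)); (3) psi = (1+2*m+2*n+2*r)/(2*(2*m-1)), t = (1+n+r)/(1+2*m+2*n+2*r); (4) psi = (m+n)/(2*(m+r)), t = (r-n)/(2*(m+r)); (5) psi = (m+n-r)/(2*(m-r)), t = (r-m-n)/(2*(r-m)) with r ≠ m; (6) psi = (1+2*m+2*n-2*r)/(2*(2*m-2*r-1)), t = (1-2*m+2*r)/(2*(2*r-2*m-2*n-1)).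 -/
/-!
In each case `psi` and `t` are quotients of linear forms in `n, m, r`. Clearing denominators
(`c2C_eq_csp_of_cross_mul`) turns the equality of central charges into an identity of polynomials
in `n, m, r`, which holds by expansion.
-/

noncomputable def c2C (n m psi : ℝ) : ℝ :=
  -((-m - n + 2 * m * psi) * (-1 - m - n + psi + 2 * m * psi) * (-1 - 2 * m - 2 * n - 2 * psi + 4 * m * psi)) / (psi * (2 * psi - 1))

/-- Clearing denominators: with `psi = a / b` and `t = c / d`, equality of the central charges
reduces to a polynomial identity in `n, m, r, a, b, c, d`. -/
lemma c2C_eq_csp_of_cross_mul {n m r psi t a b c d : ℝ}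
    (hpsi : psi = a / b) (ht : t = c / d) (hb : b ≠ 0) (hd : d ≠ 0)
    (h0 : psi ≠ 0) (h1 : psi ≠ 1 / 2) (ht0 : t ≠ 0)
    (h : ((-m - n) * b + 2 * m * a) * ((-1 - m - n) * b + a + 2 * m * a) *
          ((-1 - 2 * m - 2 * n) * b - 2 * a + 4 * m * a) * (c * d) =
        r * ((2 * r + 1) * c - (r + 1) * d) * ((4 * r - 2) * c - (2 * r + 1) * d) *
          (a * (2 * a - b) * b)) :
    c2C n m psi = csp r t := by
  have h2 : 2 * psi - 1 ≠ 0 := fun h' => h1 (by linarith)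
  have ha : a = psi * b := by rw [hpsi]; field_simp
  have hc : c = t * d := by rw [ht]; field_simp
  subst ha hc
  unfold c2C csp
  rw [div_eq_div_iff (mul_ne_zero h0 h2) ht0]
  -- Both sides of `h` are homogeneous of degree 3 in `(a, b)` and degree 2 in `(c, d)`.
  apply mul_left_cancel₀ (mul_ne_zero (pow_ne_zero 3 hb) (pow_ne_zero 2 hd))
  linear_combination -h

theorem stmt11 (n m r : ℤ) (hn : 0 ≤ n) (hm : 0 ≤ m) (hr : 1 ≤ r) :
    (∀ psi t : ℝ,
      psi = (1 + (m : ℝ) + (n : ℝ) + (r : ℝ)) / (1 + 2 * (m : ℝ)) →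
      t = (1 + (m : ℝ) + (n : ℝ) + (r : ℝ)) / (1 + 2 * (n : ℝ) + 2 * (r : ℝ)) →
      (1 + 2 * (m : ℝ)) ≠ 0 →
      (1 + 2 * (n : ℝ) + 2 * (r : ℝ)) ≠ 0 →
      psi ≠ 0 →
      psi ≠ 1 / 2 →
      t ≠ 0 →
      c2C (n : ℝ) (m : ℝ) psi = csp (r : ℝ) t) ∧
    (∀ psi t : ℝ,
      psi = (1 + (m : ℝ) + (n : ℝ)) / (1 + 2 * (m : ℝ) + 2 * (r : ℝ)) →
      t = (1 + 2 * (m : ℝ) + 2 * (r : ℝ)) / (2 * (2 * (r : ℝ) - 2 * (n : ℝ) - 1)) →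
      (1 + 2 * (m : ℝ) + 2 * (r : ℝ)) ≠ 0 →
      (2 * (2 * (r : ℝ) - 2 * (n : ℝ) - 1)) ≠ 0 →
      psi ≠ 0 →
      psi ≠ 1 / 2 →
      t ≠ 0 →
      c2C (n : ℝ) (m : ℝ) psi = csp (r : ℝ) t) ∧
    (∀ psi t : ℝ,
      psi = (1 + 2 * (m : ℝ) + 2 * (n : ℝ) + 2 * (r : ℝ)) / (2 * (2 * (m : ℝ) - 1)) →
      t = (1 + (n : ℝ) + (r : ℝ)) / (1 + 2 * (m : ℝ) + 2 * (n : ℝ) + 2 * (r : ℝ)) →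
      (2 * (2 * (m : ℝ) - 1)) ≠ 0 →
      (1 + 2 * (m : ℝ) + 2 * (n : ℝ) + 2 * (r : ℝ)) ≠ 0 →
      psi ≠ 0 →
      psi ≠ 1 / 2 →
      t ≠ 0 →
      c2C (n : ℝ) (m : ℝ) psi = csp (r : ℝ) t) ∧
    (∀ psi t : ℝ,
      psi = ((m : ℝ) + (n : ℝ)) / (2 * ((m : ℝ) + (r : ℝ))) →
      t = ((r : ℝ) - (n : ℝ)) / (2 * ((m : ℝ) + (r : ℝ))) →
      (2 * ((m : ℝ) + (r : ℝ))) ≠ 0 →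
      psi ≠ 0 →
      psi ≠ 1 / 2 →
      t ≠ 0 →
      c2C (n : ℝ) (m : ℝ) psi = csp (r : ℝ) t) ∧
    (∀ psi t : ℝ,
      psi = ((m : ℝ) + (n : ℝ) - (r : ℝ)) / (2 * ((m : ℝ) - (r : ℝ))) →
      t = ((r : ℝ) - (m : ℝ) - (n : ℝ)) / (2 * ((r : ℝ) - (m : ℝ))) →
      (2 * ((m : ℝ) - (r : ℝ))) ≠ 0 →
      (2 * ((r : ℝ) - (m : ℝ))) ≠ 0 →
      r ≠ m →
      psi ≠ 0 →
      psi ≠ 1 / 2 →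
      t ≠ 0 →
      c2C (n : ℝ) (m : ℝ) psi = csp (r : ℝ) t) ∧
    (∀ psi t : ℝ,
      psi = (1 + 2 * (m : ℝ) + 2 * (n : ℝ) - 2 * (r : ℝ)) / (2 * (2 * (m : ℝ) - 2 * (r : ℝ) - 1)) →
      t = (1 - 2 * (m : ℝ) + 2 * (r : ℝ)) / (2 * (2 * (r : ℝ) - 2 * (m : ℝ) - 2 * (n : ℝ) - 1)) →
      (2 * (2 * (m : ℝ) - 2 * (r : ℝ) - 1)) ≠ 0 →
      (2 * (2 * (r : ℝ) - 2 * (m : ℝ) - 2 * (n : ℝ) - 1)) ≠ 0 →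
      psi ≠ 0 →
      psi ≠ 1 / 2 →
      t ≠ 0 →
      c2C (n : ℝ) (m : ℝ) psi = csp (r : ℝ) t) := by
  refine ⟨?_, ?_, ?_, ?_, ?_, ?_⟩
  · intro psi t hpsi ht hb hd h0 h1 ht0
    exact c2C_eq_csp_of_cross_mul hpsi ht hb hd h0 h1 ht0 (by ring)
  · intro psi t hpsi ht hb hd h0 h1 ht0
    exact c2C_eq_csp_of_cross_mul hpsi ht hb hd h0 h1 ht0 (by ring)
  · intro psi t hpsi ht hb hd h0 h1 ht0
    exact c2C_eq_csp_of_cross_mul hpsi ht hb hd h0 h1 ht0 (by ring)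
  · intro psi t hpsi ht hb h0 h1 ht0
    exact c2C_eq_csp_of_cross_mul hpsi ht hb hb h0 h1 ht0 (by ring)
  · intro psi t hpsi ht hb hd _ h0 h1 ht0
    exact c2C_eq_csp_of_cross_mul hpsi ht hb hd h0 h1 ht0 (by ring)
  · intro psi t hpsi ht hb hd h0 h1 ht0
    exact c2C_eq_csp_of_cross_mul hpsi ht hb hd h0 h1 ht0 (by ring)
end

section
/- Central-charge part of the coincidences C_{psi,2B}(n,m) ≅ W_s(so_{2r})^{Z_2} (Appendix C, type 2B): for all integers m, n ≥ 0 and r ≥ 2, the identity c2B(n,m,psi) = cso(r,t) holds in each of the following three cases, whenever psi is not 0 or 1/2, t ≠ 0, and all displayed denominators are nonzero: (1) psi = (2*m-2*n+2*r-1)/(4*m) with m ≥ 1, t = (2*r-2*n-1)/(2*m-2*n+2*r-1); (2) psi = (1+2*m-2*n-2*r)/(2*(1+2*m-2*r)), t = (2*r-2*m-1)/(2*n+2*r-2*m-1); (3) psi = (m-n)/(2*m+2*r-1), t = (2*n+2*r-1)/(2*m+2*r-1). -/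
noncomputable def cso (r t : ℝ) : ℝ :=
  -(r * ((2 * r - 2) * t - 2 * r + 1) * ((2 * r - 1) * t - 2 * r + 2)) / t

theorem stmt14 (n m r : ℤ) (hn : 0 ≤ n) (hm : 0 ≤ m) (hr : 2 ≤ r) :
    (∀ psi t : ℝ,
      psi = (2 * (m : ℝ) - 2 * (n : ℝ) + 2 * (r : ℝ) - 1) / (4 * (m : ℝ)) →
      t = (2 * (r : ℝ) - 2 * (n : ℝ) - 1) / (2 * (m : ℝ) - 2 * (n : ℝ) + 2 * (r : ℝ) - 1) →
      (4 * (m : ℝ)) ≠ 0 →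
      (2 * (m : ℝ) - 2 * (n : ℝ) + 2 * (r : ℝ) - 1) ≠ 0 →
      1 ≤ m →
      psi ≠ 0 →
      psi ≠ 1 / 2 →
      t ≠ 0 →
      c2B (n : ℝ) (m : ℝ) psi = cso (r : ℝ) t) ∧
    (∀ psi t : ℝ,
      psi = (1 + 2 * (m : ℝ) - 2 * (n : ℝ) - 2 * (r : ℝ)) / (2 * (1 + 2 * (m : ℝ) - 2 * (r : ℝ))) →
      t = (2 * (r : ℝ) - 2 * (m : ℝ) - 1) / (2 * (n : ℝ) + 2 * (r : ℝ) - 2 * (m : ℝ) - 1) →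
      (2 * (1 + 2 * (m : ℝ) - 2 * (r : ℝ))) ≠ 0 →
      (2 * (n : ℝ) + 2 * (r : ℝ) - 2 * (m : ℝ) - 1) ≠ 0 →
      psi ≠ 0 →
      psi ≠ 1 / 2 →
      t ≠ 0 →
      c2B (n : ℝ) (m : ℝ) psi = cso (r : ℝ) t) ∧
    (∀ psi t : ℝ,
      psi = ((m : ℝ) - (n : ℝ)) / (2 * (m : ℝ) + 2 * (r : ℝ) - 1) →
      t = (2 * (n : ℝ) + 2 * (r : ℝ) - 1) / (2 * (m : ℝ) + 2 * (r : ℝ) - 1) →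
      (2 * (m : ℝ) + 2 * (r : ℝ) - 1) ≠ 0 →
      psi ≠ 0 →
      psi ≠ 1 / 2 →
      t ≠ 0 →
      c2B (n : ℝ) (m : ℝ) psi = cso (r : ℝ) t) := by
  -- Away from the poles psi = 0, psi = 1/2 and t = 0, the equality of central charges is a
  -- polynomial relation in psi and t; each parametrization satisfies it identically in n, m, r.
  have hcross : ∀ psi t : ℝ, psi ≠ 0 → psi ≠ 1 / 2 → t ≠ 0 →
      ((-m + n - psi + 2 * m * psi) * (1 - 2 * m + 2 * n + 4 * m * psi) *
        (-1 - 2 * m + 2 * n + 2 * psi + 4 * m * psi)) * t =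
      (r * ((2 * r - 2) * t - 2 * r + 1) * ((2 * r - 1) * t - 2 * r + 2)) *
        (2 * psi * (2 * psi - 1)) →
      c2B (n : ℝ) (m : ℝ) psi = cso (r : ℝ) t := by
    intro psi t h0 h1 ht h
    have h2 : 2 * psi - 1 ≠ 0 := fun h' => h1 (by linarith)
    unfold c2B cso
    rw [div_eq_div_iff (mul_ne_zero (mul_ne_zero two_ne_zero h0) h2) ht]
    linear_combination -h
  refine ⟨?_, ?_, ?_⟩
  · intro psi t hpsi ht hm0 hd _ h0 h1 ht0
    refine hcross psi t h0 h1 ht0 ?_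
    have hm1 : (m : ℝ) ≠ 0 := fun h => hm0 (by rw [h, mul_zero])
    have hn' : (n : ℝ) = m + r - 1 / 2 - 2 * m * psi := by
      rw [eq_div_iff hm0] at hpsi
      linarith
    have ht' : t = (2 * psi - 1) / (2 * psi) := by
      rw [ht, div_eq_div_iff hd (mul_ne_zero two_ne_zero h0), hn']
      ring
    rw [ht', hn']
    field_simp
    ring
  · intro psi t hpsi ht hd he h0 h1 ht0
    refine hcross psi t h0 h1 ht0 ?_
    have hn' : (n : ℝ) = (2 * r - 2 * m - 1) * (1 / t - 1) / 2 := by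
      rw [eq_div_iff he] at ht
      field_simp
      linarith
    have hpsi' : psi = 1 / (2 * t) := by
      rw [hpsi, div_eq_div_iff hd (mul_ne_zero two_ne_zero ht0), hn']
      field_simp
      ring
    rw [hpsi', hn']
    field_simp
    ring
  · intro psi t hpsi ht hd h0 h1 ht0
    refine hcross psi t h0 h1 ht0 ?_
    have hn' : (n : ℝ) = m - psi * (2 * m + 2 * r - 1) := by
      rw [eq_div_iff hd] at hpsi
      linarith
    have ht' : t = 1 - 2 * psi := by
      rw [ht, div_eq_iff hd, hn']
      ring
    rw [ht', hn']
    ring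
end

section
/- Central-charge part of the coincidences C_{psi,2C}(n,m) ≅ W_s(so_{2r})^{Z_2} (Appendix C, type 2C): for all integers m, n ≥ 0 and r ≥ 2, the identity c2C(n,m,psi) = cso(r,t) holds in each of the following three cases, whenever psi is not 0 or 1/2, t ≠ 0, and all displayed denominators are nonzero: (1) psi = (m+n+r)/(2*m) with m ≥ 1, t = (n+r)/(m+n+r); (2) psi = (1+2*m+2*n)/(2*(2*m+2*r-1)), t = 2*(r-n-1)/(2*m+2*r-1); (3) psi = (1+m+n-r)/(1+2*m-2*r), t = 2*(r-m-n-1)/(2*r-2*m-1). -/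
theorem stmt15 (n m r : ℤ) (hn : 0 ≤ n) (hm : 0 ≤ m) (hr : 2 ≤ r) :
    (∀ psi t : ℝ,
      psi = ((m : ℝ) + (n : ℝ) + (r : ℝ)) / (2 * (m : ℝ)) →
      t = ((n : ℝ) + (r : ℝ)) / ((m : ℝ) + (n : ℝ) + (r : ℝ)) →
      (2 * (m : ℝ)) ≠ 0 →
      ((m : ℝ) + (n : ℝ) + (r : ℝ)) ≠ 0 →
      1 ≤ m →
      psi ≠ 0 →
      psi ≠ 1 / 2 →
      t ≠ 0 →
      c2C (n : ℝ) (m : ℝ) psi = cso (r : ℝ) t) ∧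
    (∀ psi t : ℝ,
      psi = (1 + 2 * (m : ℝ) + 2 * (n : ℝ)) / (2 * (2 * (m : ℝ) + 2 * (r : ℝ) - 1)) →
      t = (2 * ((r : ℝ) - (n : ℝ) - 1)) / (2 * (m : ℝ) + 2 * (r : ℝ) - 1) →
      (2 * (2 * (m : ℝ) + 2 * (r : ℝ) - 1)) ≠ 0 →
      (2 * (m : ℝ) + 2 * (r : ℝ) - 1) ≠ 0 →
      psi ≠ 0 →
      psi ≠ 1 / 2 →
      t ≠ 0 →
      c2C (n : ℝ) (m : ℝ) psi = cso (r : ℝ) t) ∧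
    (∀ psi t : ℝ,
      psi = (1 + (m : ℝ) + (n : ℝ) - (r : ℝ)) / (1 + 2 * (m : ℝ) - 2 * (r : ℝ)) →
      t = (2 * ((r : ℝ) - (m : ℝ) - (n : ℝ) - 1)) / (2 * (r : ℝ) - 2 * (m : ℝ) - 1) →
      (1 + 2 * (m : ℝ) - 2 * (r : ℝ)) ≠ 0 →
      (2 * (r : ℝ) - 2 * (m : ℝ) - 1) ≠ 0 →
      psi ≠ 0 →
      psi ≠ 1 / 2 →
      t ≠ 0 →
      c2C (n : ℝ) (m : ℝ) psi = cso (r : ℝ) t) := by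
  refine ⟨?_, ?_, ?_⟩
  · rintro psi t hpsi ht h2m hA - - - ht0
    have hm0 : (m : ℝ) ≠ 0 := right_ne_zero_of_mul h2m
    have hB : (n : ℝ) + r ≠ 0 := fun h => ht0 (by rw [ht, h, zero_div])
    have hq : 2 * psi - 1 = ((n : ℝ) + r) / m := by rw [hpsi]; field_simp; ring
    rw [c2C, cso, hq, hpsi, ht]
    field_simp
    ring
  · rintro psi t hpsi ht - hD hpsi0 - ht0
    have hA : 1 + 2 * (m : ℝ) + 2 * n ≠ 0 := fun h => hpsi0 (by rw [hpsi, h, zero_div])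
    have hB : (r : ℝ) - n - 1 ≠ 0 := fun h => ht0 (by rw [ht, h, mul_zero, zero_div])
    generalize hDe : 2 * (m : ℝ) + 2 * r - 1 = D at *
    generalize hAe : 1 + 2 * (m : ℝ) + 2 * n = A at *
    generalize hBe : (r : ℝ) - n - 1 = B at *
    have hq : 2 * psi - 1 = -2 * B / D := by
      rw [hpsi]; field_simp; linarith
    rw [c2C, cso, hq, hpsi, ht]
    field_simp
    subst hDe hAe hBe
    ring
  · rintro psi t hpsi ht - hD - - ht0
    have hB : (r : ℝ) - m - n - 1 ≠ 0 := fun h => ht0 (by rw [ht, h, mul_zero, zero_div])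
    have hN : 2 * (n : ℝ) + 1 ≠ 0 := by
      have : (0 : ℝ) ≤ n := by exact_mod_cast hn
      positivity
    -- Both signs changed, so that `psi` and `t` share their denominator.
    have hp : psi = ((r : ℝ) - m - n - 1) / (2 * r - 2 * m - 1) := by
      rw [hpsi, ← neg_div_neg_eq]; congr 1 <;> ring
    clear hpsi
    generalize hDe : 2 * (r : ℝ) - 2 * m - 1 = D at *
    generalize hBe : (r : ℝ) - m - n - 1 = B at *
    generalize hNe : 2 * (n : ℝ) + 1 = N at *
    have hq : 2 * psi - 1 = -N / D := by
      rw [hp]; field_simp; linarith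
    rw [c2C, cso, hq, hp, ht]
    field_simp
    subst hDe hBe hNe
    ring
end

section
/- Central-charge part of the coincidences C_{psi,1B}(n,m) ≅ W_s(osp_{1|2r})^{Z_2} (Appendix D, type 1B): for all integers m, n ≥ 0 and r ≥ 1, the identity c1B(n,m,psi) = cosp(r,t) holds in each of the following three cases, whenever psi is not 0 or 1, t is not 0 or 1/2, and all displayed denominators are nonzero: (1) psi = (1+2*m+2*n+2*r)/(1+2*m), t = (n+r)/(1+2*m+2*n+2*r); (2) psi = (1+2*m+2*n)/(1+2*m+2*r), t = (r-n)/(1+2*m+2*r); (3) psi = (1+2*m+2*n-2*r)/(1+2*m-2*r), t = (2*r-2*m-2*n-1)/(2*(2*r-2*m-1)). -/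
noncomputable def cosp (r t : ℝ) : ℝ :=
  -(((2 * r - 1) * t - r) * (4 * r * t - 2 * r + 1) * ((4 * r + 2) * t - 2 * r - 1)) / (2 * t * (2 * t - 1))

theorem stmt16 (n m r : ℤ) (hn : 0 ≤ n) (hm : 0 ≤ m) (hr : 1 ≤ r) :
    (∀ psi t : ℝ,
      psi = (1 + 2 * (m : ℝ) + 2 * (n : ℝ) + 2 * (r : ℝ)) / (1 + 2 * (m : ℝ)) →
      t = ((n : ℝ) + (r : ℝ)) / (1 + 2 * (m : ℝ) + 2 * (n : ℝ) + 2 * (r : ℝ)) →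
      (1 + 2 * (m : ℝ)) ≠ 0 →
      (1 + 2 * (m : ℝ) + 2 * (n : ℝ) + 2 * (r : ℝ)) ≠ 0 →
      psi ≠ 0 →
      psi ≠ 1 →
      t ≠ 0 →
      t ≠ 1 / 2 →
      c1B (n : ℝ) (m : ℝ) psi = cosp (r : ℝ) t) ∧
    (∀ psi t : ℝ,
      psi = (1 + 2 * (m : ℝ) + 2 * (n : ℝ)) / (1 + 2 * (m : ℝ) + 2 * (r : ℝ)) →
      t = ((r : ℝ) - (n : ℝ)) / (1 + 2 * (m : ℝ) + 2 * (r : ℝ)) →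
      (1 + 2 * (m : ℝ) + 2 * (r : ℝ)) ≠ 0 →
      psi ≠ 0 →
      psi ≠ 1 →
      t ≠ 0 →
      t ≠ 1 / 2 →
      c1B (n : ℝ) (m : ℝ) psi = cosp (r : ℝ) t) ∧
    (∀ psi t : ℝ,
      psi = (1 + 2 * (m : ℝ) + 2 * (n : ℝ) - 2 * (r : ℝ)) / (1 + 2 * (m : ℝ) - 2 * (r : ℝ)) →
      t = (2 * (r : ℝ) - 2 * (m : ℝ) - 2 * (n : ℝ) - 1) / (2 * (2 * (r : ℝ) - 2 * (m : ℝ) - 1)) →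
      (1 + 2 * (m : ℝ) - 2 * (r : ℝ)) ≠ 0 →
      (2 * (2 * (r : ℝ) - 2 * (m : ℝ) - 1)) ≠ 0 →
      psi ≠ 0 →
      psi ≠ 1 →
      t ≠ 0 →
      t ≠ 1 / 2 →
      c1B (n : ℝ) (m : ℝ) psi = cosp (r : ℝ) t) := by
  refine ⟨?_, ?_, ?_⟩
  · intro psi t hpsi ht hD hN _ _ ht0 _
    have hs : (n : ℝ) + r ≠ 0 := fun h => ht0 (by rw [ht, h, zero_div])
    have hpsi1 : psi - 1 = 2 * ((n : ℝ) + r) / (1 + 2 * m) := by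
      rw [hpsi]; field_simp; ring
    have ht1 : 2 * t - 1 = -(1 + 2 * (m : ℝ)) / (1 + 2 * m + 2 * n + 2 * r) := by
      rw [ht]; field_simp; ring
    unfold c1B cosp
    rw [hpsi1, ht1, hpsi, ht]
    field_simp
    ring
  · intro psi t hpsi ht hD hpsi0 _ ht0 _
    have hN : 1 + 2 * (m : ℝ) + 2 * n ≠ 0 := fun h => hpsi0 (by rw [hpsi, h, zero_div])
    have hs : (r : ℝ) - n ≠ 0 := fun h => ht0 (by rw [ht, h, zero_div])
    have hpsi1 : psi - 1 = -(2 * ((r : ℝ) - n)) / (1 + 2 * m + 2 * r) := by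
      rw [hpsi]; field_simp; ring
    have ht1 : 2 * t - 1 = -(1 + 2 * (m : ℝ) + 2 * n) / (1 + 2 * m + 2 * r) := by
      rw [ht]; field_simp; ring
    unfold c1B cosp
    rw [hpsi1, ht1, hpsi, ht]
    field_simp
    ring
  · intro psi t hpsi ht hD hD' hpsi0 hpsi1 _ _
    have ht2 : t = psi / 2 := by
      rw [ht, hpsi, div_div, div_eq_div_iff hD' (mul_ne_zero hD two_ne_zero)]
      ring
    have hN : 1 + 2 * (m : ℝ) + 2 * n - 2 * r ≠ 0 :=
      fun h => hpsi0 (by rw [hpsi, h, zero_div])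
    have hpsi' : psi - 1 = 2 * (n : ℝ) / (1 + 2 * m - 2 * r) := by
      rw [hpsi]; field_simp; ring
    have hn0 : (n : ℝ) ≠ 0 := fun h => sub_ne_zero.mpr hpsi1 (by rw [hpsi', h]; simp)
    have ht1 : 2 * t - 1 = psi - 1 := by rw [ht2]; ring
    unfold c1B cosp
    rw [ht1, hpsi', ht2, hpsi]
    field_simp
    ring
end

section
/- Central-charge part of the coincidences C_{psi,2C}(n,m) ≅ W_s(osp_{1|2r})^{Z_2} (Appendix D, type 2C): for all integers m, n ≥ 0 and r ≥ 1, the identity c2C(n,m,psi) = cosp(r,t) holds in each of the following three cases, whenever psi is not 0 or 1/2, t is not 0 or 1/2, and all displayed denominators are nonzero: (1) psi = (1+2*m+2*n+2*r)/(4*m) with m ≥ 1, t = (1+2*n+2*r)/(2*(1+2*m+2*n+2*r)); (2) psi = (1+2*m+2*n)/(4*(m+r)), t = (m+r)/(2*r-2*n-1); (3) psi = (1+2*m+2*n-2*r)/(4*(m-r)), t = (r-m)/(2*r-2*m-2*n-1) with r ≠ m. -/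
/-- Equality of the two central charges at `psi = a / b` and `t = d / e`, reduced to a polynomial
identity in the numerators and denominators: cross-multiplication by `psi * (2 * psi - 1)` and
`2 * t * (2 * t - 1)`, followed by homogenization with the factor `b ^ 3 * e ^ 3`. -/
lemma c2C_eq_cosp_of_homogeneous {n m r psi t a b d e : ℝ} (hb : b ≠ 0) (he : e ≠ 0)
    (hp : psi = a / b) (ht : t = d / e) (h0 : psi ≠ 0) (h1 : psi ≠ 1 / 2)
    (h2 : t ≠ 0) (h3 : t ≠ 1 / 2)
    (h : (((-m - n) * b + 2 * m * a) * ((-1 - m - n) * b + a + 2 * m * a) *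
          ((-1 - 2 * m - 2 * n) * b - 2 * a + 4 * m * a)) * (2 * d * (2 * d - e)) * e =
        (((2 * r - 1) * d - r * e) * (4 * r * d - (2 * r - 1) * e) *
          ((4 * r + 2) * d - (2 * r + 1) * e)) * (a * (2 * a - b)) * b) :
    c2C n m psi = cosp r t := by
  have hpsi' : 2 * psi - 1 ≠ 0 := fun h => h1 (by linarith)
  have ht' : 2 * t - 1 ≠ 0 := fun h => h3 (by linarith)
  have ha : a = psi * b := by rw [hp]; field_simp
  have hd : d = t * e := by rw [ht]; field_simp
  unfold c2C cosp
  rw [div_eq_div_iff (by positivity) (by positivity)]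
  have hbe : b ^ 3 * e ^ 3 ≠ 0 := by positivity
  apply mul_left_cancel₀ hbe
  rw [ha, hd] at h
  linear_combination -h

theorem stmt18 (n m r : ℤ) (hn : 0 ≤ n) (hm : 0 ≤ m) (hr : 1 ≤ r) :
    (∀ psi t : ℝ,
      psi = (1 + 2 * (m : ℝ) + 2 * (n : ℝ) + 2 * (r : ℝ)) / (4 * (m : ℝ)) →
      t = (1 + 2 * (n : ℝ) + 2 * (r : ℝ)) / (2 * (1 + 2 * (m : ℝ) + 2 * (n : ℝ) + 2 * (r : ℝ))) →
      (4 * (m : ℝ)) ≠ 0 →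
      (2 * (1 + 2 * (m : ℝ) + 2 * (n : ℝ) + 2 * (r : ℝ))) ≠ 0 →
      1 ≤ m →
      psi ≠ 0 →
      psi ≠ 1 / 2 →
      t ≠ 0 →
      t ≠ 1 / 2 →
      c2C (n : ℝ) (m : ℝ) psi = cosp (r : ℝ) t) ∧
    (∀ psi t : ℝ,
      psi = (1 + 2 * (m : ℝ) + 2 * (n : ℝ)) / (4 * ((m : ℝ) + (r : ℝ))) →
      t = ((m : ℝ) + (r : ℝ)) / (2 * (r : ℝ) - 2 * (n : ℝ) - 1) →
      (4 * ((m : ℝ) + (r : ℝ))) ≠ 0 →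
      (2 * (r : ℝ) - 2 * (n : ℝ) - 1) ≠ 0 →
      psi ≠ 0 →
      psi ≠ 1 / 2 →
      t ≠ 0 →
      t ≠ 1 / 2 →
      c2C (n : ℝ) (m : ℝ) psi = cosp (r : ℝ) t) ∧
    (∀ psi t : ℝ,
      psi = (1 + 2 * (m : ℝ) + 2 * (n : ℝ) - 2 * (r : ℝ)) / (4 * ((m : ℝ) - (r : ℝ))) →
      t = ((r : ℝ) - (m : ℝ)) / (2 * (r : ℝ) - 2 * (m : ℝ) - 2 * (n : ℝ) - 1) →
      (4 * ((m : ℝ) - (r : ℝ))) ≠ 0 →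
      (2 * (r : ℝ) - 2 * (m : ℝ) - 2 * (n : ℝ) - 1) ≠ 0 →
      r ≠ m →
      psi ≠ 0 →
      psi ≠ 1 / 2 →
      t ≠ 0 →
      t ≠ 1 / 2 →
      c2C (n : ℝ) (m : ℝ) psi = cosp (r : ℝ) t) := by
  refine ⟨?_, ?_, ?_⟩
  · intro psi t hp ht hb he _ h0 h1 h2 h3
    apply c2C_eq_cosp_of_homogeneous hb he hp ht h0 h1 h2 h3
    ring
  · intro psi t hp ht hb he h0 h1 h2 h3
    apply c2C_eq_cosp_of_homogeneous hb he hp ht h0 h1 h2 h3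
    ring
  · intro psi t hp ht hb he _ h0 h1 h2 h3
    apply c2C_eq_cosp_of_homogeneous hb he hp ht h0 h1 h2 h3
    ring
end

section
/- Central-charge part of the final Corollary of Appendix D (coincidences W_k(osp_{1|2m})^{Z_2} ≅ W_l(osp_{1|2n})^{Z_2}): for all integers m, n ≥ 1, the four values c2B(0, m, (m+n)/(2*m)), c2B(0, m, m/(2*(m+n))), c2B(0, n, (m+n)/(2*n)), and c2B(0, n, n/(2*(m+n))) are all equal, and their common value is -((1+2*m)*(1+2*n)*(2*m*n - m - n))/(2*(m+n)). -/
lemma c2B_add_div {a b : ℝ} (ha : 0 < a) (hb : 0 < b) :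
    c2B 0 a ((a + b) / (2 * a)) =
      -((1 + 2 * a) * (1 + 2 * b) * (2 * a * b - a - b)) / (2 * (a + b)) := by
  have hab : a + b ≠ 0 := by positivity
  have hpsi : 2 * ((a + b) / (2 * a)) - 1 = b / a := by
    field_simp
    ring
  unfold c2B
  rw [hpsi]
  field_simp
  ring

lemma c2B_div_add {a b : ℝ} (ha : 0 < a) (hb : 0 < b) :
    c2B 0 a (a / (2 * (a + b))) =
      -((1 + 2 * a) * (1 + 2 * b) * (2 * a * b - a - b)) / (2 * (a + b)) := by
  have hab : a + b ≠ 0 := by positivity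
  have hpsi : 2 * (a / (2 * (a + b))) - 1 = -b / (a + b) := by
    field_simp
    ring
  unfold c2B
  rw [hpsi]
  field_simp
  ring

theorem stmt19 (m n : ℤ) (hm : 1 ≤ m) (hn : 1 ≤ n) :
    c2B 0 (m : ℝ) (((m : ℝ) + (n : ℝ)) / (2 * (m : ℝ))) = -((1 + 2 * (m : ℝ)) * (1 + 2 * (n : ℝ)) * (2 * (m : ℝ) * (n : ℝ) - (m : ℝ) - (n : ℝ))) / (2 * ((m : ℝ) + (n : ℝ))) ∧
    c2B 0 (m : ℝ) ((m : ℝ) / (2 * ((m : ℝ) + (n : ℝ)))) = -((1 + 2 * (m : ℝ)) * (1 + 2 * (n : ℝ)) * (2 * (m : ℝ) * (n : ℝ) - (m : ℝ) - (n : ℝ))) / (2 * ((m : ℝ) + (n : ℝ))) ∧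
    c2B 0 (n : ℝ) (((m : ℝ) + (n : ℝ)) / (2 * (n : ℝ))) = -((1 + 2 * (m : ℝ)) * (1 + 2 * (n : ℝ)) * (2 * (m : ℝ) * (n : ℝ) - (m : ℝ) - (n : ℝ))) / (2 * ((m : ℝ) + (n : ℝ))) ∧
    c2B 0 (n : ℝ) ((n : ℝ) / (2 * ((m : ℝ) + (n : ℝ)))) = -((1 + 2 * (m : ℝ)) * (1 + 2 * (n : ℝ)) * (2 * (m : ℝ) * (n : ℝ) - (m : ℝ) - (n : ℝ))) / (2 * ((m : ℝ) + (n : ℝ))) := by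
  have hmpos : (0 : ℝ) < m := by exact_mod_cast hm
  have hnpos : (0 : ℝ) < n := by exact_mod_cast hn
  refine ⟨c2B_add_div hmpos hnpos, c2B_div_add hmpos hnpos, ?_, ?_⟩
  · rw [add_comm (m : ℝ), c2B_add_div hnpos hmpos]
    ring
  · rw [add_comm (m : ℝ), c2B_div_add hnpos hmpos]
    ring
end
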